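/- If f, g : ℝ^N → [−∞, ∞] are Borel measurable, then the functions f⊼g and f⊻g are Lebesgue measurable. -/

import Mathlib

open MeasureTheory Filter Set
open scoped ENNReal NNReal Pointwise

noncomputable section

/-- `ℝ^N` with the Euclidean structure and Lebesgue measure. -/
abbrev ES (N : ℕ) := EuclideanSpace ℝ (Fin N)

variable {N : ℕ}

/-- The operation `(f ⊼ g)(x) = sup_y min (f (x - y)) (g y)` for extended-real valued
functions. -/
def supMinE (f g : ES N → EReal) (x : ES N) : EReal := ⨆ y, min (f (x - y)) (g y)

/-- The operation `(f ⊻ g)(x) = inf_y max (f (x - y)) (g y)` for extended-real valued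
functions. -/
def infMaxE (f g : ES N → EReal) (x : ES N) : EReal := ⨅ y, max (f (x - y)) (g y)

/-- The infimal convolution `(f □ g)(x) = inf_y (f (x - y) + g y)`. -/
def infConvE (f g : ES N → EReal) (x : ES N) : EReal := ⨅ y, (f (x - y) + g y)

/-- The operation `(f ⊼ g)(x) = sup_y min (f (x - y)) (g y)` for `[0,∞]`-valued functions. -/
def supMin (f g : ES N → ℝ≥0∞) (x : ES N) : ℝ≥0∞ := ⨆ y, min (f (x - y)) (g y)

/-- A Young function: a nonconstant, nondecreasing, convex, left-continuous
`φ : [0,∞] → [0,∞]` with `φ 0 = 0`. -/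
structure IsYoungFunction (φ : ℝ≥0∞ → ℝ≥0∞) : Prop where
  nonconstant : ∃ x y, φ x ≠ φ y
  map_zero : φ 0 = 0
  mono : Monotone φ
  convex : ∀ ⦃a b x y : ℝ≥0∞⦄, a + b = 1 → φ (a * x + b * y) ≤ a * φ x + b * φ y
  left_continuous : ∀ x, ContinuousWithinAt φ (Set.Iio x) x

/-- The Luxemburg norm `‖h‖_φ = inf {r > 0 | ∫ φ (r⁻¹ |h|) ≤ 1}` (`= ∞` if no such `r`),
for a nonnegative function `h`. -/
def luxNorm (φ : ℝ≥0∞ → ℝ≥0∞) (h : ES N → ℝ≥0∞) : ℝ≥0∞ :=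
  sInf {r : ℝ≥0∞ | 0 < r ∧ ∫⁻ x, φ (r⁻¹ * h x) ≤ 1}

/-- The nonnegative part of an extended real, as an element of `[0,∞]`. -/
def toENN (a : EReal) : ℝ≥0∞ := if a = ⊤ then ⊤ else ENNReal.ofReal a.toReal

/-- The reciprocal `1/a ∈ [0,∞]` of an extended real (intended for `a ≥ 0`), with the
conventions `1/0 = ∞` and `1/∞ = 0`. -/
def eInv (a : EReal) : ℝ≥0∞ := (toENN a)⁻¹

/-- The enclosing radius of a set `X ⊆ ℝ^N`: the infimum of the radii of closed balls
containing `X` (`0` for `X = ∅`, `∞` if `X` is unbounded). -/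
def encRadius (X : Set (ES N)) : ℝ≥0∞ := sInf {r : ℝ≥0∞ | ∃ c : ES N, ∀ x ∈ X, edist x c ≤ r}

/-- The transform `f̂(x) = γ_f^+(|x|)` where `γ_f^+(t) = inf {ξ | ρ_f^+(ξ) ≤ t}` and
`ρ_f^+(ξ)` is the enclosing radius of the upper level set `{f > ξ}`. -/
def hatE (f : ES N → EReal) (x : ES N) : EReal :=
  sInf {ξ : EReal | encRadius {y | ξ < f y} ≤ (‖x‖₊ : ℝ≥0∞)}

/-- The lower transform `f̌ = -((-f)^)`. -/
def checkE (f : ES N → EReal) (x : ES N) : EReal := - hatE (fun y => - f y) x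

/-- The transform `f̂` for `[0,∞]`-valued functions. -/
def hatT (f : ES N → ℝ≥0∞) (x : ES N) : ℝ≥0∞ :=
  sInf {ξ : ℝ≥0∞ | encRadius {y | ξ < f y} ≤ (‖x‖₊ : ℝ≥0∞)}

/-- The lower transform `f̌(x) = γ_f^-(|x|)`, `γ_f^-(t) = sup {ξ | ρ({f < ξ}) ≤ t}`,
for `[0,∞]`-valued functions. -/
def checkT (f : ES N → ℝ≥0∞) (x : ES N) : ℝ≥0∞ :=
  sSup {ξ : ℝ≥0∞ | encRadius {y | f y < ξ} ≤ (‖x‖₊ : ℝ≥0∞)}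

/-- The `L^p` "norm" (`p ∈ [1,∞]`, essential supremum when `p = ∞`) of a `[0,∞]`-valued
function. -/
def pNorm (p : ℝ≥0∞) (h : ES N → ℝ≥0∞) : ℝ≥0∞ :=
  if p = ∞ then essSup h volume else (∫⁻ x, h x ^ p.toReal) ^ (1 / p.toReal)

/-- Boxes in the Baire space are compact. -/
theorem isCompact_setOf_forall_le (n : ℕ → ℕ) : IsCompact {x : ℕ → ℕ | ∀ i, x i ≤ n i} := by
  simpa [Set.pi] using isCompact_univ_pi fun i => (finite_Iic (n i)).isCompact

/-- If a box `{x | ∀ i, x i ≤ n i}` of the Baire space is contained in an open set, then so is the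
larger set obtained by keeping only finitely many of the constraints. -/
theorem exists_forall_lt_le_subset_of_isOpen {n : ℕ → ℕ} {V : Set (ℕ → ℕ)} (hV : IsOpen V)
    (h : {x | ∀ i, x i ≤ n i} ⊆ V) : ∃ k, {x : ℕ → ℕ | ∀ i < k, x i ≤ n i} ⊆ V := by
  by_contra! hcon
  simp only [not_subset] at hcon
  choose x hx hxV using hcon
  obtain ⟨y, hy, φ, hφ, hlim⟩ := (isCompact_setOf_forall_le n).tendsto_subseq
    (x := fun k i => min (x k i) (n i)) fun k i => min_le_right _ _
  have hlim' : Tendsto (x ∘ φ) atTop (nhds y) := by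
    rw [tendsto_pi_nhds] at hlim ⊢
    intro i
    refine (hlim i).congr' ?_
    filter_upwards [eventually_gt_atTop i] with k hk
    exact min_eq_left (hx (φ k) i (hk.trans_le (hφ.id_le k)))
  exact hV.isClosed_compl.mem_of_tendsto hlim' (Eventually.of_forall fun k => hxV (φ k)) (h hy)

/-- The range of a continuous function on the Baire space is approximated in measure from inside by
compact sets. -/
theorem exists_isCompact_subset_range_measure_le_add {α : Type*} [TopologicalSpace α]
    [MeasurableSpace α] {μ : Measure α} [IsFiniteMeasure μ] [μ.OuterRegular]
    {f : (ℕ → ℕ) → α} (hf : Continuous f) {ε : ℝ≥0∞} (hε : ε ≠ 0) :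
    ∃ K ⊆ range f, IsCompact K ∧ μ (range f) ≤ μ K + ε := by
  obtain ⟨δ, hδ, hδε⟩ := ENNReal.exists_pos_sum_of_countable' (ENNReal.half_pos hε).ne' ℕ
  have hstep (T : Set (ℕ → ℕ)) (k : ℕ) :
      ∃ m, μ (f '' T) ≤ μ (f '' (T ∩ {x | x k ≤ m})) + δ k := by
    have hmono : Monotone fun m => f '' (T ∩ {x | x k ≤ m}) := fun a b hab =>
      image_mono (inter_subset_inter_right _ fun x hx => le_trans hx hab)
    have hU : ⋃ m, f '' (T ∩ {x | x k ≤ m}) = f '' T := by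
      rw [← image_iUnion, ← inter_iUnion, inter_eq_left.2]
      exact fun x _ => mem_iUnion.2 ⟨x k, le_refl (x k)⟩
    have hlim := (tendsto_measure_iUnion_atTop (μ := μ) hmono).add_const (δ k)
    rw [hU] at hlim
    obtain ⟨m, hm⟩ := (hlim.eventually_const_lt
      (ENNReal.lt_add_right (measure_ne_top _ _) (hδ k).ne')).exists
    exact ⟨m, hm.le⟩
  choose m hm using hstep
  let T : ℕ → Set (ℕ → ℕ) := Nat.rec univ fun k S => S ∩ {x | x k ≤ m S k}
  let n : ℕ → ℕ := fun k => m (T k) k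
  have hT (k : ℕ) : T k = {x | ∀ i < k, x i ≤ n i} := by
    induction k with
    | zero => simp [T]
    | succ k ih =>
      change T k ∩ {x | x k ≤ n k} = _
      rw [ih]
      ext x
      exact Nat.forall_lt_succ_right.symm
  have hsum (k : ℕ) : μ (range f) ≤ μ (f '' T k) + ∑ i ∈ Finset.range k, δ i := by
    induction k with
    | zero => simp [T]
    | succ k ih =>
      calc μ (range f) ≤ μ (f '' T k) + ∑ i ∈ Finset.range k, δ i := ih
        _ ≤ μ (f '' T (k + 1)) + δ k + ∑ i ∈ Finset.range k, δ i := by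
          gcongr
          exact hm (T k) k
        _ = _ := by rw [Finset.sum_range_succ, add_assoc, add_comm (δ k)]
  refine ⟨f '' {x | ∀ i, x i ≤ n i}, image_subset_range _ _, (isCompact_setOf_forall_le n).image hf, ?_⟩
  obtain ⟨U, hKU, hU, hμU⟩ := Set.exists_isOpen_lt_add (μ := μ) (f '' {x | ∀ i, x i ≤ n i})
    (measure_ne_top _ _) (ENNReal.half_pos hε).ne'
  obtain ⟨k, hk⟩ := exists_forall_lt_le_subset_of_isOpen (hU.preimage hf) (image_subset_iff.1 hKU)
  calc μ (range f) ≤ μ (f '' T k) + ∑ i ∈ Finset.range k, δ i := hsum k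
    _ ≤ μ U + ε / 2 := by
      gcongr
      · rw [hT]
        exact image_subset_iff.2 hk
      · exact (ENNReal.sum_le_tsum _).trans hδε.le
    _ ≤ μ (f '' {x | ∀ i, x i ≤ n i}) + ε / 2 + ε / 2 := by gcongr
    _ = _ := by rw [add_assoc, ENNReal.add_halves]

/-- Analytic sets are universally measurable. -/
theorem MeasureTheory.AnalyticSet.nullMeasurableSet {α : Type*} [TopologicalSpace α]
    [TopologicalSpace.PseudoMetrizableSpace α] [T2Space α] [MeasurableSpace α] [BorelSpace α]
    {s : Set α} (hs : AnalyticSet s) (μ : Measure α) [SFinite μ] : NullMeasurableSet s μ := by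
  refine NullMeasurableSet.mono_ac (μ := μ.toFinite) ?_ (absolutelyContinuous_toFinite μ)
  rw [AnalyticSet] at hs
  obtain rfl | ⟨f, hf, rfl⟩ := hs
  · exact nullMeasurableSet_empty
  choose K hKs hK hμK using fun j : ℕ =>
    exists_isCompact_subset_range_measure_le_add (μ := μ.toFinite) hf
      (ENNReal.inv_ne_zero.2 (ENNReal.natCast_ne_top j))
  have hmeas : MeasurableSet (⋃ j, K j) := .iUnion fun j => (hK j).measurableSet
  have hle : μ.toFinite (range f) ≤ μ.toFinite (⋃ j, K j) := by
    have hlim := ENNReal.tendsto_inv_nat_nhds_zero.const_add (μ.toFinite (⋃ j, K j))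
    rw [add_zero] at hlim
    refine ge_of_tendsto' hlim fun j => (hμK j).trans ?_
    gcongr
    exact subset_iUnion K j
  exact hmeas.nullMeasurableSet.congr
    (ae_eq_of_subset_of_measure_ge (iUnion_subset hKs) hle hmeas.nullMeasurableSet
      (measure_ne_top _ _))

/-- The set of sums of points of two Borel sets is Lebesgue measurable. -/
theorem nullMeasurableSet_setOf_exists_sub_mem {A B : Set (ES N)} (hA : MeasurableSet A)
    (hB : MeasurableSet B) : NullMeasurableSet {x : ES N | ∃ y, x - y ∈ A ∧ y ∈ B} := by
  have h : {x : ES N | ∃ y, x - y ∈ A ∧ y ∈ B} = (fun p : ES N × ES N => p.1 + p.2) '' A ×ˢ B := by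
    ext x
    constructor
    · rintro ⟨y, hxy, hy⟩
      exact ⟨(x - y, y), ⟨hxy, hy⟩, sub_add_cancel x y⟩
    · rintro ⟨⟨u, v⟩, ⟨hu, hv⟩, rfl⟩
      exact ⟨v, by simpa using hu, hv⟩
  rw [h]
  exact ((hA.prod hB).analyticSet.image_of_continuous continuous_add).nullMeasurableSet volume

theorem supMinE_infMaxE_lebesgue_measurable {N : ℕ}
    (f g : ES N → EReal) (hf : Measurable f) (hg : Measurable g) :
    AEMeasurable (supMinE f g) (volume : Measure (ES N)) ∧
      AEMeasurable (infMaxE f g) (volume : Measure (ES N)) := by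
  constructor
  · refine NullMeasurable.aemeasurable
      (measurable_of_Ioi (δ := NullMeasurableSpace (ES N) volume) fun a => ?_)
    change NullMeasurableSet (supMinE f g ⁻¹' Ioi a) volume
    have h : supMinE f g ⁻¹' Ioi a = {x | ∃ y, x - y ∈ f ⁻¹' Ioi a ∧ y ∈ g ⁻¹' Ioi a} := by
      ext x
      simp [supMinE, lt_iSup_iff]
    rw [h]
    exact nullMeasurableSet_setOf_exists_sub_mem (hf measurableSet_Ioi) (hg measurableSet_Ioi)
  · refine NullMeasurable.aemeasurable
      (measurable_of_Iio (δ := NullMeasurableSpace (ES N) volume) fun a => ?_)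
    change NullMeasurableSet (infMaxE f g ⁻¹' Iio a) volume
    have h : infMaxE f g ⁻¹' Iio a = {x | ∃ y, x - y ∈ f ⁻¹' Iio a ∧ y ∈ g ⁻¹' Iio a} := by
      ext x
      simp [infMaxE, iInf_lt_iff]
    rw [h]
    exact nullMeasurableSet_setOf_exists_sub_mem (hf measurableSet_Iio) (hg measurableSet_Iio)

end
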